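/- arXiv:2604.12557 — 2 statements merged into one kernel-verified Lean document; each statement's English description precedes it below -/
import Mathlib

section
/- The generating function for overpartitions counted by missing integers satisfies: ∑_{n≥0} ∑_{m≥0} 𝑃̄(n,m) w^m q^n = ((w-2)q;q)_∞ / (wq;q)_∞, where 𝑃̄(0,0)=1. -/
/-!
Classify overpartitions by their largest part `N`. A size `j < N` is either missing (weight `w`) or
occurs `k ≥ 1` times, overlined or not (weight `2 q^{jk}`), which sums to
`w + 2 q^j / (1 - q^j) = (w - (w - 2) q^j) / (1 - q^j)`; the size `N` itself contributes
`2 q^N / (1 - q^N)`. The overpartitions with largest part `N` therefore contribute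
`q^N ∏_{j<N} (w - (w - 2) q^j) / (1 - q^{j+1})`, where the factor `j = 0` of the numerator is the
`2` coming from the largest part (`hasSum_profileWeight`); the empty overpartition is `N = 0`.

Summing over `N` is the q-binomial theorem (`qBinomial`), proved here from the functional equation
`(1 - w z) f(z) = (1 - (w - 2) z) f(z q)` (`qCoeff_functional`). It is evaluated at `z = q`.

All rearrangements are justified by absolute convergence: replacing `w` and `q` by their norms in
the weights gives a series of the same shape, which converges because the ratio of consecutive
terms tends to `‖w q‖ < 1` (`qCoeff_summable`, `hasSum_sigma_profileWeight`).
-/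


/-- An overpartition of `n`: a partition of `n` together with a choice, for each
distinct part size, of whether its first occurrence is overlined. -/
structure Overpartition (n : ℕ) where
  partition : n.Partition
  overlined : Finset ℕ
  overlined_subset : overlined ⊆ partition.parts.toFinset

instance subsetFintype (t : Finset ℕ) : Fintype {s : Finset ℕ // s ⊆ t} :=
  Fintype.subtype t.powerset (fun _ => Finset.mem_powerset)

instance (n : ℕ) : Fintype (Overpartition n) :=
  Fintype.ofEquiv (Σ π : n.Partition, {s : Finset ℕ // s ⊆ π.parts.toFinset})
    { toFun := fun x => ⟨x.1, x.2.1, x.2.2⟩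
      invFun := fun o => ⟨o.partition, o.overlined, o.overlined_subset⟩
      left_inv := fun _ => rfl
      right_inv := fun _ => rfl }

/-- The number of missing integers of an overpartition: positive integers less than
the largest part which occur neither overlined nor non-overlined. -/
def missingCount {n : ℕ} (o : Overpartition n) : ℕ :=
  ((Finset.Ico 1 o.partition.parts.sup).filter (fun j => j ∉ o.partition.parts)).card

/-- `OPcount n m` is the number of overpartitions of `n` with exactly `m` missing integers. -/
def OPcount (n m : ℕ) : ℕ := Fintype.card {o : Overpartition n // missingCount o = m}

open Filter Topology

/-! ### The q-binomial theorem in homogeneous form -/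

section Analytic

variable {𝕜 : Type*} [NormedField 𝕜]

/-- `∏_{j<N} (w - b q^j) / (1 - q^{j+1})`, that is `w^N (b/w; q)_N / (q; q)_N` without the
division by `w`, so that `w = 0` needs no separate treatment. -/
def qCoeff (w b q : 𝕜) (N : ℕ) : 𝕜 :=
  ∏ j ∈ Finset.range N, (w - b * q ^ j) / (1 - q ^ (j + 1))

lemma hasSum_of_eq {ι : Type*} {f g : ι → 𝕜} {a : 𝕜} (h : HasSum f a) (e : ∀ i, g i = f i) :
    HasSum g a := by
  rwa [funext e]

lemma one_sub_pow_ne_zero {q : 𝕜} (hq : ‖q‖ < 1) (j : ℕ) : 1 - q ^ (j + 1) ≠ 0 := by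
  intro h
  have h1 : ‖q ^ (j + 1)‖ = 1 := by rw [← sub_eq_zero.mp h, norm_one]
  rw [norm_pow] at h1
  exact absurd h1 (pow_lt_one₀ (norm_nonneg _) hq (by simp)).ne

lemma qCoeff_summable {w b q z : 𝕜} (hq : ‖q‖ < 1) (hz : ‖w * z‖ < 1) :
    Summable fun N => ‖qCoeff w b q N * z ^ N‖ := by
  have hp : Tendsto (fun N : ℕ => q ^ N) atTop (𝓝 0) :=
    tendsto_pow_atTop_nhds_zero_of_norm_lt_one hq
  have hlim : Tendsto (fun N : ℕ => ‖(w - b * q ^ N) / (1 - q ^ (N + 1)) * z‖) atTop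
      (𝓝 ‖(w - b * 0) / (1 - 0) * z‖) :=
    ((((tendsto_const_nhds.sub (hp.const_mul b)).div
      (tendsto_const_nhds.sub ((tendsto_add_atTop_iff_nat 1).2 hp)) (by simp)).mul_const z).norm)
  rw [mul_zero, sub_zero, sub_zero, div_one] at hlim
  obtain ⟨r, hr, hr1⟩ := exists_between hz
  refine summable_of_ratio_norm_eventually_le hr1 ?_
  filter_upwards [hlim.eventually_le_const hr] with N hN
  rw [norm_norm, norm_norm]
  calc ‖qCoeff w b q (N + 1) * z ^ (N + 1)‖
      = ‖(w - b * q ^ N) / (1 - q ^ (N + 1)) * z‖ * ‖qCoeff w b q N * z ^ N‖ := by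
        rw [← norm_mul, qCoeff, Finset.prod_range_succ, ← qCoeff]
        congr 1; ring
    _ ≤ r * ‖qCoeff w b q N * z ^ N‖ := by gcongr

/-- With `f z = ∑ qCoeff N z^N`, this is `(1 - w z) f(z) = (1 - b z) f(z q)`. -/
lemma qCoeff_functional [CompleteSpace 𝕜] {w b q z : 𝕜} (hq : ‖q‖ < 1) (hz : ‖w * z‖ < 1) :
    (1 - w * z) * ∑' N, qCoeff w b q N * z ^ N
      = (1 - b * z) * ∑' N, qCoeff w b q N * (z * q) ^ N := by
  have hz' : ‖w * (z * q)‖ < 1 := by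
    rw [← mul_assoc, norm_mul]
    exact mul_lt_one_of_nonneg_of_lt_one_left (norm_nonneg _) hz hq.le
  have h1 := (qCoeff_summable (b := b) hq hz).of_norm.hasSum
  have h2 := (qCoeff_summable (b := b) hq hz').of_norm.hasSum
  set f := ∑' N, qCoeff w b q N * z ^ N
  set g := ∑' N, qCoeff w b q N * (z * q) ^ N
  have h3 := ((h1.mul_left w).sub (h2.mul_left b)).mul_left z
  have h4 := h1.sub h2
  -- both `f - g` and `z (w f - b g)` sum the same series, up to a shift of the index by one
  have h5 : HasSum (fun N => qCoeff w b q N * z ^ N - qCoeff w b q N * (z * q) ^ N)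
      (0 + z * (w * f - b * g)) := by
    have h6 : HasSum (fun N => qCoeff w b q (N + 1) * z ^ (N + 1)
        - qCoeff w b q (N + 1) * (z * q) ^ (N + 1)) (z * (w * f - b * g)) := by
      refine hasSum_of_eq h3 fun N => ?_
      have hN := one_sub_pow_ne_zero hq N
      rw [qCoeff, Finset.prod_range_succ, ← qCoeff]
      calc qCoeff w b q N * ((w - b * q ^ N) / (1 - q ^ (N + 1))) * z ^ (N + 1)
            - qCoeff w b q N * ((w - b * q ^ N) / (1 - q ^ (N + 1))) * (z * q) ^ (N + 1)
          = qCoeff w b q N * (w - b * q ^ N) * z ^ (N + 1)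
              * ((1 - q ^ (N + 1)) / (1 - q ^ (N + 1))) := by ring
        _ = _ := by rw [div_self hN, mul_pow]; ring
    have h7 := HasSum.zero_add
      (f := fun N => qCoeff w b q N * z ^ N - qCoeff w b q N * (z * q) ^ N) h6
    simp only [pow_zero, sub_self] at h7
    exact h7
  linear_combination h4.unique h5

/-- The q-binomial theorem `∑ qCoeff N z^N = (b z; q)_∞ / (w z; q)_∞`: iterate the functional
equation of `qCoeff_functional`, and use that the sum tends to `1` as its argument tends to `0`. -/
lemma qBinomial [CompleteSpace 𝕜] {w b q z : 𝕜} (hq : ‖q‖ < 1) (hz : ‖w * z‖ < 1) :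
    ∑' N, qCoeff w b q N * z ^ N
      = (∏' j : ℕ, (1 - b * (z * q ^ j))) / ∏' j : ℕ, (1 - w * (z * q ^ j)) := by
  have hsum (c : 𝕜) : Summable fun j : ℕ => ‖-(c * (z * q ^ j))‖ := by
    simp_rw [norm_neg, norm_mul, norm_pow]
    exact ((summable_geometric_of_lt_one (norm_nonneg _) hq).mul_left _).mul_left _
  have hmul (c : 𝕜) : Tendsto (fun n => ∏ j ∈ Finset.range n, (1 - c * (z * q ^ j))) atTop
      (𝓝 (∏' j : ℕ, (1 - c * (z * q ^ j)))) := by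
    simpa only [← sub_eq_add_neg] using
      (multipliable_one_add_of_summable (hsum c)).hasProd.tendsto_prod_nat
  have hzj (j : ℕ) : ‖w * (z * q ^ j)‖ < 1 := by
    rw [← mul_assoc, norm_mul, norm_pow]
    exact mul_lt_one_of_nonneg_of_lt_one_left (norm_nonneg _) hz
      (pow_le_one₀ (norm_nonneg _) hq.le)
  have hne : ∏' j : ℕ, (1 - w * (z * q ^ j)) ≠ 0 := by
    simp_rw [sub_eq_add_neg]
    refine tprod_one_add_ne_zero_of_summable (fun j h => ?_) (hsum w)
    rw [← sub_eq_add_neg, sub_eq_zero] at h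
    have := hzj j
    rw [← h, norm_one] at this
    exact lt_irrefl _ this
  have hiter (n : ℕ) : (∏ j ∈ Finset.range n, (1 - w * (z * q ^ j)))
      * ∑' N, qCoeff w b q N * z ^ N = (∏ j ∈ Finset.range n, (1 - b * (z * q ^ j)))
      * ∑' N, qCoeff w b q N * (z * q ^ n) ^ N := by
    induction n with
    | zero => simp
    | succ n ih =>
      have := qCoeff_functional (b := b) hq (hzj n)
      rw [mul_assoc z, ← pow_succ] at this
      rw [Finset.prod_range_succ, Finset.prod_range_succ, mul_right_comm, ih, mul_assoc _ _ (∑' N, _),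
        ← this]
      ring
  have hone : Tendsto (fun n => ∑' N, qCoeff w b q N * (z * q ^ n) ^ N) atTop (𝓝 1) := by
    have h0 : ∑' N, (if N = 0 then (1 : 𝕜) else 0) = 1 := by simp
    rw [← h0]
    refine tendsto_tsum_of_dominated_convergence (qCoeff_summable (b := b) hq hz) ?_ ?_
    · intro N
      rcases N with _ | N
      · simp [qCoeff]
      · have : Tendsto (fun n : ℕ => qCoeff w b q (N + 1) * (z * q ^ n) ^ (N + 1)) atTop
            (𝓝 (qCoeff w b q (N + 1) * (z * 0) ^ (N + 1))) :=
          (((tendsto_pow_atTop_nhds_zero_of_norm_lt_one hq).const_mul z).pow _).const_mul _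
        simpa using this
    · refine Eventually.of_forall fun n N => ?_
      rw [mul_pow, ← mul_assoc, norm_mul _ ((q ^ n) ^ N), norm_pow, norm_pow]
      exact mul_le_of_le_one_right (norm_nonneg _)
        (pow_le_one₀ (by positivity) (pow_le_one₀ (norm_nonneg _) hq.le))
  rw [eq_div_iff hne, mul_comm]
  have := tendsto_nhds_unique ((hmul w).mul_const _)
    (((hmul b).mul hone).congr fun n => (hiter n).symm)
  rwa [mul_one] at this

end Analytic

/-! ### Sums over multiplicity profiles -/

section Profile
variable {𝕜 : Type*} [NormedField 𝕜]

/-- A finite product of absolutely convergent series is the sum of the products of their terms. -/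
lemma hasSum_pi_prod [CompleteSpace 𝕜] {N : ℕ} {f : Fin N → ℕ → 𝕜} {a : Fin N → 𝕜}
    (hf : ∀ i, HasSum (f i) (a i)) (hn : ∀ i, Summable fun k => ‖f i k‖) :
    HasSum (fun v : Fin N → ℕ => ∏ i, f i (v i)) (∏ i, a i) ∧
      Summable fun v : Fin N → ℕ => ‖∏ i, f i (v i)‖ := by
  induction N with
  | zero => exact ⟨by simp,
      (hasSum_unique _).summable⟩
  | succ N ih =>
    obtain ⟨h1, h2⟩ := ih (fun i => hf i.succ) (fun i => hn i.succ)
    have h3 := (hn 0).mul_norm h2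
    have h4 := (hf 0).mul h1 h3.of_norm
    rw [Fin.prod_univ_succ, ← (Fin.consEquiv fun _ => ℕ).hasSum_iff,
      ← (Fin.consEquiv fun _ => ℕ).summable_iff]
    simp only [Function.comp_def, Fin.consEquiv_apply, Fin.prod_univ_succ, Fin.cons_zero,
      Fin.cons_succ]
    exact ⟨h4, h3⟩

/-- The contribution of the size `j`, below the largest part, occurring `k` times: `w` if it is
missing, otherwise `q^{jk}` with a factor `2` for the choice of overlining its first occurrence. -/
def mulWeight (w q : 𝕜) (j k : ℕ) : 𝕜 := if k = 0 then w else 2 * q ^ (j * k)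

lemma hasSum_positive_mult {q : 𝕜} (hq : ‖q‖ < 1) (j : ℕ) :
    HasSum (fun k => 2 * q ^ ((j + 1) * (k + 1))) (2 * q ^ (j + 1) / (1 - q ^ (j + 1))) := by
  have hqj : ‖q ^ (j + 1)‖ < 1 := by
    rw [norm_pow]; exact pow_lt_one₀ (norm_nonneg _) hq (by simp)
  have h := (hasSum_geometric_of_norm_lt_one hqj).mul_left (2 * q ^ (j + 1))
  rw [← div_eq_mul_inv] at h
  refine hasSum_of_eq h fun k => ?_
  rw [pow_mul]; ring

lemma hasSum_mulWeight {q : 𝕜} (w : 𝕜) (hq : ‖q‖ < 1) (j : ℕ) :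
    HasSum (mulWeight w q (j + 1)) ((w - (w - 2) * q ^ (j + 1)) / (1 - q ^ (j + 1))) := by
  have h : HasSum (fun k => mulWeight w q (j + 1) (k + 1))
      (2 * q ^ (j + 1) / (1 - q ^ (j + 1))) := by
    simpa [mulWeight] using hasSum_positive_mult hq j
  convert h.zero_add using 1
  have := one_sub_pow_ne_zero hq j
  simp only [mulWeight, if_true]
  field_simp
  ring

/-- A nonempty partition with largest part `N + 1` is encoded by a profile `(v, k)`: the size
`i + 1` has multiplicity `v i` for `i < N`, and `N + 1` has multiplicity `k + 1`. The weight of the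
profile is `2^{number of part sizes} w^{number of missing integers} q^{sum of parts}`. -/
def profileWeight (w q : 𝕜) {N : ℕ} (x : (Fin N → ℕ) × ℕ) : 𝕜 :=
  (∏ i : Fin N, mulWeight w q (i + 1) (x.1 i)) * (2 * q ^ ((N + 1) * (x.2 + 1)))

lemma norm_mulWeight (w q : ℂ) (j k : ℕ) : ‖mulWeight w q j k‖ = mulWeight ‖w‖ ‖q‖ j k := by
  unfold mulWeight; split_ifs <;> simp

lemma norm_profileWeight (w q : ℂ) {N : ℕ} (x : (Fin N → ℕ) × ℕ) :
    ‖profileWeight w q x‖ = profileWeight ‖w‖ ‖q‖ x := by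
  simp [profileWeight, norm_mulWeight]

/-- The profiles with largest part `N + 1` contribute the term of index `N + 1` of the q-binomial
series with `b = w - 2` and `z = q`; its factor `j = 0` is `w - b = 2`. -/
lemma hasSum_profileWeight {𝕜 : Type*} [RCLike 𝕜] (w : 𝕜) {q : 𝕜} (hq : ‖q‖ < 1) (N : ℕ) :
    HasSum (fun x : (Fin N → ℕ) × ℕ => profileWeight w q x)
      (qCoeff w (w - 2) q (N + 1) * q ^ (N + 1)) := by
  obtain ⟨h1, h2⟩ := hasSum_pi_prod (N := N) (fun i => hasSum_mulWeight w hq i)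
    (fun i => (hasSum_mulWeight w hq i).summable.norm)
  have h3 := hasSum_positive_mult hq N
  have h4 := h1.mul h3 (h2.mul_norm h3.summable.norm).of_norm
  suffices h : qCoeff w (w - 2) q (N + 1) * q ^ (N + 1) =
      (∏ i : Fin N, (w - (w - 2) * q ^ (i + 1 : ℕ)) / (1 - q ^ (i + 1 : ℕ)))
        * (2 * q ^ (N + 1) / (1 - q ^ (N + 1))) by rw [h]; exact h4
  rw [qCoeff, Finset.prod_div_distrib, Finset.prod_range_succ',
    Finset.prod_range_succ (fun j => 1 - q ^ (j + 1)),
    Finset.prod_div_distrib, Fin.prod_univ_eq_prod_range (fun j => w - (w - 2) * q ^ (j + 1)),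
    Fin.prod_univ_eq_prod_range (fun j => 1 - q ^ (j + 1))]
  simp only [pow_zero, mul_one, sub_sub_cancel]
  rw [div_mul_div_comm, div_mul_eq_mul_div]
  ring

lemma hasSum_sigma_profileWeight {w q : ℂ} (hq : ‖q‖ < 1) (hwq : ‖w * q‖ < 1) :
    HasSum (fun x : Σ N, (Fin N → ℕ) × ℕ => profileWeight w q x.2)
      (∑' N, qCoeff w (w - 2) q (N + 1) * q ^ (N + 1)) := by
  have hs : Summable (fun x : Σ N, (Fin N → ℕ) × ℕ => ‖profileWeight w q x.2‖) := by
    -- the norms are the same weights at `(‖w‖, ‖q‖)`, so their sum over each fibre is known too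
    rw [summable_sigma_of_nonneg fun _ => norm_nonneg _]
    have hq' : ‖‖q‖‖ < 1 := by simpa using hq
    simp_rw [norm_profileWeight]
    refine ⟨fun N => (hasSum_profileWeight ‖w‖ hq' N).summable, ?_⟩
    simp_rw [fun N => (hasSum_profileWeight ‖w‖ hq' N).tsum_eq]
    exact (summable_nat_add_iff 1).2 (qCoeff_summable (w := ‖w‖) (b := ‖w‖ - 2) (z := ‖q‖) hq'
      (by simpa using hwq)).of_norm
  refine HasSum.sigma_of_hasSum ?_ (fun N => hasSum_profileWeight w hq N) hs.of_norm
  exact ((summable_nat_add_iff 1).2 (qCoeff_summable (b := w - 2) hq hwq).of_norm).hasSum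

end Profile

/-! ### Overpartitions and multiplicity profiles -/

section Combinatorics

/-- `missingCount`, for the multiset of parts alone. -/
def missing (s : Multiset ℕ) : ℕ := ((Finset.Ico 1 s.sup).filter (fun j => j ∉ s)).card

/-- The total weight of the overpartitions whose multiset of parts is `s`. -/
def multisetWeight (w q : ℂ) (s : Multiset ℕ) : ℂ :=
  2 ^ s.toFinset.card * (w ^ missing s * q ^ s.sum)

/-- The multiset of parts encoded by a profile (see `profileWeight`). -/
def ofProfile {N : ℕ} (x : (Fin N → ℕ) × ℕ) : Multiset ℕ :=
  (∑ i : Fin N, Multiset.replicate (x.1 i) (i + 1 : ℕ)) + Multiset.replicate (x.2 + 1) (N + 1)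

lemma count_ofProfile {N : ℕ} (x : (Fin N → ℕ) × ℕ) (j : ℕ) :
    (ofProfile x).count j =
      (∑ i : Fin N, if (i + 1 : ℕ) = j then x.1 i else 0) + if N + 1 = j then x.2 + 1 else 0 := by
  simp only [ofProfile, Multiset.count_add, Multiset.count_sum', Multiset.count_replicate]

lemma count_ofProfile_fin {N : ℕ} (x : (Fin N → ℕ) × ℕ) (i : Fin N) :
    (ofProfile x).count (i + 1 : ℕ) = x.1 i := by
  rw [count_ofProfile, if_neg (by omega)]
  simp [Fin.val_inj]

lemma count_ofProfile_top {N : ℕ} (x : (Fin N → ℕ) × ℕ) :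
    (ofProfile x).count (N + 1) = x.2 + 1 := by
  rw [count_ofProfile, if_pos rfl, Finset.sum_eq_zero, zero_add]
  intro i _
  exact if_neg (by omega)

lemma mem_ofProfile_bounds {N : ℕ} {x : (Fin N → ℕ) × ℕ} {j : ℕ} (h : j ∈ ofProfile x) :
    1 ≤ j ∧ j ≤ N + 1 := by
  simp only [ofProfile, Multiset.mem_add, Multiset.mem_sum, Multiset.mem_replicate] at h
  rcases h with ⟨i, -, -, rfl⟩ | ⟨-, rfl⟩ <;> omega

lemma top_mem_ofProfile {N : ℕ} (x : (Fin N → ℕ) × ℕ) : N + 1 ∈ ofProfile x := by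
  simp [← Multiset.count_pos, count_ofProfile_top]

lemma sup_ofProfile {N : ℕ} (x : (Fin N → ℕ) × ℕ) : (ofProfile x).sup = N + 1 :=
  le_antisymm (Multiset.sup_le.2 fun _ h => (mem_ofProfile_bounds h).2)
    (Multiset.le_sup (top_mem_ofProfile x))

lemma mem_ofProfile_fin {N : ℕ} (x : (Fin N → ℕ) × ℕ) (i : Fin N) :
    (i + 1 : ℕ) ∈ ofProfile x ↔ x.1 i ≠ 0 := by
  rw [← Multiset.count_ne_zero, count_ofProfile_fin]

lemma missing_ofProfile {N : ℕ} (x : (Fin N → ℕ) × ℕ) :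
    missing (ofProfile x) = ∑ i : Fin N, if x.1 i = 0 then 1 else 0 := by
  rw [missing, sup_ofProfile, Finset.card_filter, Finset.sum_Ico_eq_sum_range, Nat.add_sub_cancel,
    ← Fin.sum_univ_eq_sum_range (fun i => if 1 + i ∉ ofProfile x then 1 else 0)]
  refine Finset.sum_congr rfl fun i _ => ?_
  simp only [add_comm 1, mem_ofProfile_fin, not_not]

lemma card_toFinset_ofProfile {N : ℕ} (x : (Fin N → ℕ) × ℕ) :
    (ofProfile x).toFinset.card = (∑ i : Fin N, if x.1 i = 0 then 0 else 1) + 1 := by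
  have h : (ofProfile x).toFinset = (Finset.Ico 1 (N + 1 + 1)).filter (fun j => j ∈ ofProfile x) := by
    ext j
    simp only [Multiset.mem_toFinset, Finset.mem_filter, Finset.mem_Ico]
    exact ⟨fun h => ⟨by have := mem_ofProfile_bounds h; omega, h⟩, fun h => h.2⟩
  rw [h, Finset.card_filter, Finset.sum_Ico_eq_sum_range, Nat.add_sub_cancel,
    Finset.sum_range_succ, add_comm 1 N, if_pos (top_mem_ofProfile x),
    ← Fin.sum_univ_eq_sum_range (fun i => if 1 + i ∈ ofProfile x then 1 else 0)]
  congr 1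
  refine Finset.sum_congr rfl fun i _ => ?_
  simp only [add_comm 1, mem_ofProfile_fin, ite_not]

lemma sum_ofProfile {N : ℕ} (x : (Fin N → ℕ) × ℕ) :
    (ofProfile x).sum = (∑ i : Fin N, (i + 1) * x.1 i) + (N + 1) * (x.2 + 1) := by
  rw [ofProfile, Multiset.sum_add, Multiset.sum_sum]
  simp only [Multiset.sum_replicate, smul_eq_mul, mul_comm]

lemma multisetWeight_ofProfile (w q : ℂ) {N : ℕ} (x : (Fin N → ℕ) × ℕ) :
    multisetWeight w q (ofProfile x) = profileWeight w q x := by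
  rw [multisetWeight, missing_ofProfile, card_toFinset_ofProfile, sum_ofProfile, profileWeight]
  have h (i : Fin N) : mulWeight w q (i + 1) (x.1 i) = 2 ^ (if x.1 i = 0 then 0 else 1) *
      w ^ (if x.1 i = 0 then 1 else 0) * q ^ ((i + 1 : ℕ) * x.1 i) := by
    unfold mulWeight; split_ifs with h0 <;> simp [h0]
  simp_rw [h, Finset.prod_mul_distrib, Finset.prod_pow_eq_pow_sum]
  ring

/-- Multisets of positive integers, i.e. partitions of an unspecified number. -/
abbrev PosMultiset := {s : Multiset ℕ // 0 ∉ s}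

/-- The decoding of profiles; it is injective, and its range consists of the nonempty multisets. -/
def profileMap (x : Σ N, (Fin N → ℕ) × ℕ) : PosMultiset :=
  ⟨ofProfile x.2, fun h => absurd (mem_ofProfile_bounds h).1 (by simp)⟩

lemma profileMap_injective : Function.Injective profileMap := by
  rintro ⟨N, x⟩ ⟨N', y⟩ h
  have h : ofProfile x = ofProfile y := congrArg Subtype.val h
  obtain rfl : N = N' := by
    have := congrArg Multiset.sup h
    rw [sup_ofProfile, sup_ofProfile] at this
    omega
  congr 1
  refine Prod.ext (funext fun i => ?_) ?_
  · rw [← count_ofProfile_fin x, h, count_ofProfile_fin]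
  · have h1 := count_ofProfile_top x
    rw [h, count_ofProfile_top] at h1
    omega

lemma mem_range_profileMap (s : PosMultiset) (hs : s.1 ≠ 0) : s ∈ Set.range profileMap := by
  obtain ⟨s, h0⟩ := s
  change s ≠ 0 at hs
  have hpos : 0 < s.sup := by
    obtain ⟨a, ha⟩ := Multiset.exists_mem_of_ne_zero hs
    have : a ≠ 0 := fun h => h0 (h ▸ ha)
    have := Multiset.le_sup ha
    omega
  have hsup : s.sup ∈ s := by
    by_contra hn
    have : s.sup ≤ s.sup - 1 := Multiset.sup_le.2 fun b hb => by
      have h1 := Multiset.le_sup hb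
      have : b ≠ s.sup := fun h => hn (h ▸ hb)
      omega
    omega
  obtain ⟨N, hN⟩ : ∃ N, s.sup = N + 1 := ⟨s.sup - 1, by omega⟩
  rw [hN] at hsup
  have hc := Multiset.count_pos.2 hsup
  set x : (Fin N → ℕ) × ℕ := (fun i => s.count (i + 1 : ℕ), s.count (N + 1) - 1) with hx
  refine ⟨⟨N, x⟩, Subtype.ext (Multiset.ext.2 fun j => ?_)⟩
  change (ofProfile x).count j = s.count j
  by_cases hj : 1 ≤ j ∧ j ≤ N + 1
  · rcases hj.2.eq_or_lt with rfl | hlt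
    · rw [count_ofProfile_top]
      simp only [hx]
      omega
    · obtain ⟨i, rfl⟩ : ∃ i : Fin N, j = (i + 1 : ℕ) := ⟨⟨j - 1, by omega⟩, by simp; omega⟩
      exact count_ofProfile_fin x i
  · rw [Multiset.count_eq_zero.2 fun h => hj (mem_ofProfile_bounds h),
      Multiset.count_eq_zero.2 fun h => hj ⟨?_, hN ▸ Multiset.le_sup h⟩]
    exact Nat.one_le_iff_ne_zero.2 fun h' => h0 (h' ▸ h)

/-- Profiles account for all nonempty multisets, and the empty one supplies the term `N = 0`. -/
lemma hasSum_multisetWeight {w q : ℂ} (hq : ‖q‖ < 1) (hwq : ‖w * q‖ < 1) :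
    HasSum (fun s : PosMultiset => multisetWeight w q s) (∑' N, qCoeff w (w - 2) q N * q ^ N) ∧
    Summable fun s : PosMultiset => ‖multisetWeight w q s‖ := by
  have h1 := hasSum_sigma_profileWeight hq hwq
  let e : PosMultiset := ⟨0, Multiset.notMem_zero 0⟩
  have he : e ∉ Set.range profileMap := by
    rintro ⟨x, hx⟩
    have h0 : ofProfile x.2 = 0 := congrArg Subtype.val hx
    have := top_mem_ofProfile x.2
    simp [h0] at this
  let F : PosMultiset → ℂ := fun s => multisetWeight w q s
  have hcomp : (fun x : Σ N, (Fin N → ℕ) × ℕ => profileWeight w q x.2)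
      = Function.update F e 0 ∘ profileMap := by
    funext x
    rw [Function.comp_apply, Function.update_of_ne fun h => he ⟨x, h⟩]
    exact (multisetWeight_ofProfile w q x.2).symm
  have hzero : ∀ s ∉ Set.range profileMap, Function.update F e 0 s = 0 := by
    intro s hs
    by_cases h : s = e
    · subst h; simp
    · exact absurd (mem_range_profileMap s fun h' => h (Subtype.ext h')) hs
  rw [hcomp, profileMap_injective.hasSum_iff hzero] at h1
  have hFe : F e = 1 := by simp [F, e, multisetWeight, missing]
  have h3 : HasSum F (1 + ∑' N, qCoeff w (w - 2) q (N + 1) * q ^ (N + 1)) := by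
    have := h1.update e 1
    simp only [Function.update_self, Function.update_idem, sub_zero] at this
    rwa [← hFe, Function.update_eq_self, hFe] at this
  have h4 : ∑' N, qCoeff w (w - 2) q N * q ^ N
      = 1 + ∑' N, qCoeff w (w - 2) q (N + 1) * q ^ (N + 1) := by
    rw [(qCoeff_summable (b := w - 2) hq hwq).of_norm.tsum_eq_zero_add]
    simp [qCoeff]
  rw [h4]
  exact ⟨h3, h3.summable.norm⟩

/-- An overpartition of `n` with `m` missing integers, for varying `(n, m)`, is a multiset of
positive integers with a set of part sizes to overline. -/
def markedEquiv : (Σ p : ℕ × ℕ, {o : Overpartition p.1 // missingCount o = p.2}) ≃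
    Σ s : PosMultiset, {o : Finset ℕ // o ⊆ s.1.toFinset} where
  toFun t := ⟨⟨t.2.1.partition.parts, fun h => (t.2.1.partition.parts_pos h).false⟩,
    t.2.1.overlined, t.2.1.overlined_subset⟩
  invFun u := ⟨(u.1.1.sum, missing u.1.1),
    ⟨⟨⟨u.1.1, fun h => Nat.pos_of_ne_zero fun h0 => u.1.2 (h0 ▸ h), rfl⟩, u.2.1, u.2.2⟩, rfl⟩⟩
  left_inv := by
    have key : ∀ (n : ℕ) (π : n.Partition) (t : Finset ℕ) (ht : t ⊆ π.parts.toFinset) (m : ℕ)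
        (hm : missingCount (⟨π, t, ht⟩ : Overpartition n) = m),
        (⟨(π.parts.sum, missing π.parts),
          ⟨⟨⟨π.parts, π.parts_pos, rfl⟩, t, ht⟩, rfl⟩⟩ :
          Σ p : ℕ × ℕ, {o : Overpartition p.1 // missingCount o = p.2})
          = ⟨(n, m), ⟨⟨π, t, ht⟩, hm⟩⟩ := by
      rintro n ⟨s, hs, rfl⟩ t ht m rfl
      rfl
    rintro ⟨⟨n, m⟩, ⟨⟨π, t, ht⟩, hm⟩⟩
    exact key n π t ht m hm
  right_inv _ := rfl

end Combinatorics

theorem statement11 (w q : ℂ) (hq : ‖q‖ < 1) (hwq : ‖w * q‖ < 1) :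
    ∑' p : ℕ × ℕ, (OPcount p.1 p.2 : ℂ) * w ^ p.2 * q ^ p.1 =
      (∏' j : ℕ, (1 - (w - 2) * q ^ (j + 1))) / ∏' j : ℕ, (1 - w * q ^ (j + 1)) := by
  obtain ⟨h1, h2⟩ := hasSum_multisetWeight hq hwq
  rw [qBinomial hq hwq] at h1
  simp_rw [← pow_succ'] at h1
  have hcard (s : PosMultiset) :
      Fintype.card {o : Finset ℕ // o ⊆ s.1.toFinset} = 2 ^ s.1.toFinset.card := by
    rw [Fintype.card_of_subtype s.1.toFinset.powerset fun _ => Finset.mem_powerset,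
      Finset.card_powerset]
  have hfib (s : PosMultiset) : HasSum (fun _ : {o : Finset ℕ // o ⊆ s.1.toFinset} =>
      w ^ missing s.1 * q ^ s.1.sum) (multisetWeight w q s) := by
    have h := hasSum_fintype fun _ : {o : Finset ℕ // o ⊆ s.1.toFinset} =>
      w ^ missing s.1 * q ^ s.1.sum
    rw [Finset.sum_const, Finset.card_univ, hcard, nsmul_eq_mul] at h
    push_cast at h
    exact h
  have hsummable : Summable fun u : Σ s : PosMultiset, {o : Finset ℕ // o ⊆ s.1.toFinset} =>
      w ^ missing u.1.1 * q ^ u.1.1.sum := by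
    refine Summable.of_norm ((summable_sigma_of_nonneg fun _ => norm_nonneg _).2
      ⟨fun s => (hasSum_fintype _).summable, ?_⟩)
    refine h2.congr fun s => ?_
    dsimp only
    rw [tsum_fintype, Finset.sum_const, Finset.card_univ, hcard, multisetWeight, nsmul_eq_mul]
    simp
  have hT := markedEquiv.hasSum_iff.2 (h1.sigma_of_hasSum hfib hsummable)
  -- on the fibre over `(n, m)` the summand is the constant `w^m q^n`
  have hT' : HasSum (fun t : Σ p : ℕ × ℕ, {o : Overpartition p.1 // missingCount o = p.2} =>
      w ^ t.1.2 * q ^ t.1.1) ((∏' j : ℕ, (1 - (w - 2) * q ^ (j + 1)))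
        / ∏' j : ℕ, (1 - w * q ^ (j + 1))) := by
    refine hasSum_of_eq hT ?_
    rintro ⟨p, o, ho⟩
    have hm : missing o.partition.parts = p.2 := ho
    simp only [Function.comp_apply, markedEquiv, Equiv.coe_fn_mk, hm, o.partition.parts_sum]
  have hfib' (p : ℕ × ℕ) : HasSum (fun _ : {o : Overpartition p.1 // missingCount o = p.2} =>
      w ^ p.2 * q ^ p.1) ((OPcount p.1 p.2 : ℂ) * w ^ p.2 * q ^ p.1) := by
    have h := hasSum_fintype fun _ : {o : Overpartition p.1 // missingCount o = p.2} =>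
      w ^ p.2 * q ^ p.1
    rw [Finset.sum_const, Finset.card_univ, nsmul_eq_mul, ← mul_assoc] at h
    exact h
  exact (HasSum.sigma hT' hfib').tsum_eq
end

section
/- The number of gap-free overpartitions of n (overpartitions in which every positive integer less than the largest part occurs as a part) equals the number of overpartitions of n into distinct parts (each integer occurs at most once, either overlined or non-overlined but not both); both are generated by (-2q;q)_∞. -/
/-! ### Conjugate partitions -/

/-- The sequence `i ↦ #{parts > i}`, `i` below the largest part: the parts of the conjugate
partition in weakly decreasing order. -/
def conjList (M : Multiset ℕ) : List ℕ :=
  (List.range M.sup).map fun i => M.countP (i < ·)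

lemma countP_lt_antitone (M : Multiset ℕ) : Antitone fun i => M.countP (i < ·) := by
  intro i j hij
  simp only [Multiset.countP_eq_card_filter]
  exact Multiset.card_le_card (Multiset.monotone_filter_right M (fun x hx => lt_of_le_of_lt hij hx))

/-- The conjugate sequence drops at `i` by the multiplicity of `i + 1`. -/
lemma countP_lt_step (M : Multiset ℕ) (i : ℕ) :
    M.countP (i < ·) = M.countP (i + 1 < ·) + M.count (i + 1) := by
  induction M using Multiset.induction_on with
  | empty => simp
  | cons a M ih =>
    simp only [Multiset.countP_cons, Multiset.count_cons, ih]
    split_ifs <;> omega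

lemma countP_lt_pos_iff (M : Multiset ℕ) (i : ℕ) : 0 < M.countP (i < ·) ↔ i < M.sup := by
  rw [Multiset.countP_pos]
  constructor
  · rintro ⟨a, ha, h⟩
    exact lt_of_lt_of_le h (Multiset.le_sup ha)
  · intro h
    by_contra! hc
    exact absurd (Multiset.sup_le.2 hc) (not_le.2 h)

lemma sum_conjList (M : Multiset ℕ) : (conjList M).sum = M.sum := by
  have key : ∀ N, (∀ x ∈ M, x ≤ N) → ∑ i ∈ Finset.range N, M.countP (i < ·) = M.sum := by
    intro N
    induction M using Multiset.induction_on with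
    | empty => simp
    | cons a M ih =>
      intro h
      simp only [Multiset.countP_cons, Finset.sum_add_distrib, Multiset.sum_cons]
      rw [ih (fun x hx => h x (Multiset.mem_cons_of_mem hx)), ← Finset.sum_filter,
        Finset.sum_const, smul_eq_mul, mul_one]
      have ha := h a (Multiset.mem_cons_self a M)
      have : (Finset.range N).filter (fun i => i < a) = Finset.range a := by
        ext x; simp; omega
      rw [this, Finset.card_range, add_comm]
  rw [← key M.sup (fun x hx => Multiset.le_sup hx)]
  rfl

lemma conjList_pos {M : Multiset ℕ} {x : ℕ} (hx : x ∈ conjList M) : 0 < x := by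
  simp only [conjList, List.mem_map, List.mem_range] at hx
  obtain ⟨i, hi, rfl⟩ := hx
  exact (countP_lt_pos_iff M i).2 hi

/-- A decreasing list is recovered from its multiset of entries, and the conjugate
sequence from all its values recovers every multiplicity. -/
lemma conjList_injective {M N : Multiset ℕ} (hM : ∀ x ∈ M, 0 < x) (hN : ∀ x ∈ N, 0 < x)
    (h : (conjList M : Multiset ℕ) = conjList N) : M = N := by
  have sorted : ∀ K : Multiset ℕ, (conjList K).Pairwise (· ≥ ·) := fun K =>
    List.pairwise_map.2 (List.pairwise_lt_range.imp
      fun hab => countP_lt_antitone K hab.le)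
  have hl : conjList M = conjList N :=
    List.Perm.eq_of_pairwise' (sorted M) (sorted N) (Multiset.coe_eq_coe.1 h)
  have hs : M.sup = N.sup := by simpa [conjList] using congrArg List.length hl
  have hc : ∀ i, M.countP (i < ·) = N.countP (i < ·) := by
    intro i
    by_cases hi : i < M.sup
    · have := congrArg (fun l => l[i]?) hl
      simpa [conjList, hi, hs ▸ hi] using this
    · have h1 := mt (countP_lt_pos_iff M i).1 hi
      have h2 := mt (countP_lt_pos_iff N i).1 (hs ▸ hi)
      omega
  ext x
  rcases x with _ | x
  · rw [Multiset.count_eq_zero_of_notMem fun h0 => lt_irrefl _ (hM 0 h0),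
      Multiset.count_eq_zero_of_notMem fun h0 => lt_irrefl _ (hN 0 h0)]
  · have := countP_lt_step M x
    have := countP_lt_step N x
    have := hc x
    have := hc (x + 1)
    omega

/-- The conjugate of a partition of `n`. -/
def conj {n : ℕ} (π : n.Partition) : n.Partition where
  parts := conjList π.parts
  parts_pos := fun h => conjList_pos (Multiset.mem_coe.1 h)
  parts_sum := by rw [Multiset.sum_coe, sum_conjList, π.parts_sum]

lemma conjugate_injective {n : ℕ} : Function.Injective (conj (n := n)) := fun π ρ h =>
  Nat.Partition.ext (conjList_injective (fun _ h => π.parts_pos h) (fun _ h => ρ.parts_pos h)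
    (congrArg Nat.Partition.parts h))

/-! ### Gap-free partitions and distinct parts -/

/-- No positive integer below the largest part is missing. -/
def GapFree {n : ℕ} (π : n.Partition) : Prop :=
  ((Finset.Ico 1 π.parts.sup).filter (fun j => j ∉ π.parts)).card = 0

lemma gapFree_iff {n : ℕ} (π : n.Partition) :
    GapFree π ↔ ∀ j, 1 ≤ j → j < π.parts.sup → j ∈ π.parts := by
  simp [GapFree, Finset.filter_eq_empty_iff]

lemma GapFree.toFinset_eq {n : ℕ} {π : n.Partition} (h : GapFree π) :
    π.parts.toFinset = Finset.Icc 1 π.parts.sup := by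
  rw [gapFree_iff] at h
  ext j
  rw [Multiset.mem_toFinset, Finset.mem_Icc]
  refine ⟨fun hj => ⟨π.parts_pos hj, Multiset.le_sup hj⟩, fun ⟨h1, h2⟩ => ?_⟩
  rcases h2.lt_or_eq with h2 | h2
  · exact h j h1 h2
  ·
    -- the largest part occurs: otherwise the conjugate sequence would not drop at `j - 1`
    obtain ⟨i, rfl⟩ : ∃ i, j = i + 1 := ⟨j - 1, by omega⟩
    have h3 := (countP_lt_pos_iff π.parts i).2 (by omega)
    have h4 := mt (countP_lt_pos_iff π.parts (i + 1)).1 (by omega)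
    have h5 := countP_lt_step π.parts i
    exact Multiset.count_pos.1 (by omega)

lemma GapFree.conj_nodup {n : ℕ} {π : n.Partition} (h : GapFree π) : (conj π).parts.Nodup := by
  have hs := h.toFinset_eq
  refine Multiset.coe_nodup.2 ?_
  refine List.pairwise_map.2 (List.Pairwise.imp_of_mem ?_ List.pairwise_lt_range)
  intro a b _ hb hab
  rw [List.mem_range] at hb
  have ha : a + 1 ∈ π.parts := by
    rw [← Multiset.mem_toFinset, hs, Finset.mem_Icc]; omega
  have h1 := countP_lt_step π.parts a
  have h2 := Multiset.count_pos.2 ha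
  have h3 : π.parts.countP (b < ·) ≤ π.parts.countP (a + 1 < ·) :=
    countP_lt_antitone π.parts hab
  omega

lemma GapFree.card_conj {n : ℕ} {π : n.Partition} (h : GapFree π) :
    (conj π).parts.toFinset.card = π.parts.toFinset.card := by
  rw [Multiset.toFinset_card_of_nodup h.conj_nodup, h.toFinset_eq]
  simp [conj, conjList]

/-- The conjugate sequence of a partition into distinct parts drops by at most one at a time,
from the number of parts to zero. -/
lemma conj_toFinset_of_nodup {n : ℕ} {π : n.Partition} (h : π.parts.Nodup) :
    (conj π).parts.toFinset = Finset.Icc 1 (Multiset.card π.parts) := by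
  have h0 : π.parts.countP (0 < ·) = Multiset.card π.parts :=
    Multiset.countP_eq_card.2 fun _ hx => π.parts_pos hx
  ext j
  rw [Multiset.mem_toFinset, Finset.mem_Icc]
  refine ⟨fun hj => ⟨(conj π).parts_pos hj, ?_⟩, fun ⟨h1, h2⟩ => ?_⟩
  · obtain ⟨i, -, rfl⟩ := List.mem_map.1 (Multiset.mem_coe.1 hj)
    exact Multiset.countP_le_card _ _
  ·
    -- the value `j` is taken just before the first index at which the sequence is below `j`
    have hex : ∃ i, π.parts.countP (i < ·) < j := by
      refine ⟨π.parts.sup, ?_⟩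
      have := mt (countP_lt_pos_iff π.parts π.parts.sup).1 (lt_irrefl _)
      omega
    have hsp := Nat.find_spec hex
    have hmin := fun m => Nat.find_min hex (m := m)
    generalize Nat.find hex = k at hsp hmin
    rcases k with _ | i
    · omega
    · have h3 := hmin i (Nat.lt_succ_self i)
      have h4 := countP_lt_step π.parts i
      have h5 := Multiset.nodup_iff_count_le_one.1 h (i + 1)
      refine Multiset.mem_coe.2 (List.mem_map.2 ⟨i, ?_, by omega⟩)
      exact List.mem_range.2 ((countP_lt_pos_iff π.parts i).1 (by omega))

lemma conj_gapFree_of_nodup {n : ℕ} {π : n.Partition} (h : π.parts.Nodup) :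
    GapFree (conj π) := by
  have hs := conj_toFinset_of_nodup h
  rw [gapFree_iff]
  intro j h1 h2
  rw [← Multiset.mem_toFinset, hs, Finset.mem_Icc]
  refine ⟨h1, h2.le.trans (Multiset.sup_le.2 fun b hb => ?_)⟩
  rw [← Multiset.mem_toFinset, hs, Finset.mem_Icc] at hb
  exact hb.2

/-! ### Counting overpartitions by underlying partitions -/

/-- Overpartitions are partitions weighted by the number of subsets of their part sizes. -/
lemma card_overpartition {n : ℕ} (R : Overpartition n → Prop) (P : n.Partition → Prop)
    (hR : ∀ o, R o ↔ P o.partition) [Fintype {o // R o}] [Fintype {π // P π}] :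
    Fintype.card {o // R o} =
      ∑ π : {π : n.Partition // P π}, 2 ^ π.1.parts.toFinset.card := by
  rw [Fintype.card_congr (β := Σ π : {π : n.Partition // P π},
      {s : Finset ℕ // s ⊆ π.1.parts.toFinset})
    { toFun := fun o => ⟨⟨o.1.partition, (hR _).1 o.2⟩, o.1.overlined, o.1.overlined_subset⟩
      invFun := fun x => ⟨⟨x.1.1, x.2.1, x.2.2⟩, (hR _).2 x.1.2⟩
      left_inv := fun _ => rfl
      right_inv := fun _ => rfl }, Fintype.card_sigma]
  refine Finset.sum_congr rfl fun π _ => ?_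
  rw [Fintype.card_of_subtype π.1.parts.toFinset.powerset (fun _ => Finset.mem_powerset),
    Finset.card_powerset]

/-- A weight-preserving injection bounds one weighted count by another. -/
lemma sum_le_of_injection {α β : Type*} [Fintype α] [Fintype β] (f : α → β)
    (hf : Function.Injective f) (u : α → ℕ) (v : β → ℕ) (h : ∀ a, v (f a) = u a) :
    ∑ a, u a ≤ ∑ b, v b := by
  calc ∑ a, u a = ∑ b ∈ Finset.univ.map ⟨f, hf⟩, v b := by simp [h]
    _ ≤ ∑ b, v b := Finset.sum_le_sum_of_subset (Finset.subset_univ _)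

open Classical in
lemma weighted_count_eq (n : ℕ) :
    ∑ π : {π : n.Partition // GapFree π}, 2 ^ π.1.parts.toFinset.card =
      ∑ π : {π : n.Partition // π.parts.Nodup}, 2 ^ π.1.parts.toFinset.card := by
  apply le_antisymm
  · refine sum_le_of_injection (fun π => ⟨conj π.1, π.2.conj_nodup⟩) ?_ _ _
      (fun π => congrArg (2 ^ ·) π.2.card_conj)
    exact fun a b hab => Subtype.ext (conjugate_injective (congrArg Subtype.val hab))
  · refine sum_le_of_injection (fun π => ⟨conj π.1, conj_gapFree_of_nodup π.2⟩) ?_ _ _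
      (fun π => ?_)
    · exact fun a b hab => Subtype.ext (conjugate_injective (congrArg Subtype.val hab))
    · rw [conj_toFinset_of_nodup π.2, Multiset.toFinset_card_of_nodup π.2]
      simp

/-! ### Generating function -/

/-- A finite set `s` of naturals, read as the partition with parts `i + 1` for `i ∈ s`. -/
def finsetEquivDistinct (n : ℕ) :
    {s : Finset ℕ // ∑ i ∈ s, (i + 1) = n} ≃ {π : n.Partition // π.parts.Nodup} where
  toFun s := ⟨⟨s.1.val.map (· + 1), by
      intro i hi
      obtain ⟨a, -, rfl⟩ := Multiset.mem_map.1 hi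
      omega, s.2⟩, s.1.nodup.map (add_left_injective 1)⟩
  invFun π := ⟨⟨π.1.parts.map (· - 1), by
      refine Multiset.Nodup.map_on (fun x hx y hy hxy => ?_) π.2
      have := π.1.parts_pos hx
      have := π.1.parts_pos hy
      omega⟩, by
    refine Eq.trans ?_ π.1.parts_sum
    simp only [Finset.sum, Multiset.map_map]
    refine congrArg Multiset.sum (Eq.trans (Multiset.map_congr rfl fun x hx => ?_)
      (Multiset.map_id _))
    have := π.1.parts_pos hx
    simp only [Function.comp, id]
    omega⟩
  left_inv s := by
    apply Subtype.ext
    apply Finset.val_injective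
    simp [Multiset.map_map]
  right_inv π := by
    apply Subtype.ext
    apply Nat.Partition.ext
    simp only [Multiset.map_map]
    refine Eq.trans (Multiset.map_congr rfl fun x hx => ?_) (Multiset.map_id _)
    have := π.1.parts_pos hx
    simp only [Function.comp, id]
    omega

open Classical in
lemma tsum_distinct (q : ℂ) (hq : ‖q‖ < 1) :
    ∑' n : ℕ, ((∑ π : {π : n.Partition // π.parts.Nodup},
        2 ^ π.1.parts.toFinset.card : ℕ) : ℂ) * q ^ n = ∏' k : ℕ, (1 + 2 * q ^ (k + 1)) := by
  have hsum : Summable fun k : ℕ => ‖2 * q ^ (k + 1)‖ := by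
    simp only [norm_mul, norm_pow, pow_succ]
    exact ((summable_geometric_of_lt_one (norm_nonneg q) hq).mul_right _).mul_left _
  have hs : Summable fun s : Finset ℕ => ∏ k ∈ s, (2 * q ^ (k + 1)) :=
    summable_finsetProd_of_summable_norm hsum
  rw [tprod_one_add hs,
    ← (Equiv.sigmaFiberEquiv fun s : Finset ℕ => ∑ i ∈ s, (i + 1)).tsum_eq]
  refine Eq.trans ?_ ((Equiv.sigmaFiberEquiv fun s : Finset ℕ => ∑ i ∈ s, (i + 1)).summable_iff.2 hs).tsum_sigma.symm
  refine tsum_congr fun n => ?_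
  have hterm : ∀ s : {s : Finset ℕ // ∑ i ∈ s, (i + 1) = n},
      ∏ k ∈ s.1, (2 * q ^ (k + 1)) =
        2 ^ (finsetEquivDistinct n s).1.parts.toFinset.card * q ^ n := by
    rintro ⟨s, rfl⟩
    rw [Multiset.toFinset_card_of_nodup (finsetEquivDistinct _ _).2, Finset.prod_mul_distrib,
      Finset.prod_const, Finset.prod_pow_eq_pow_sum]
    simp [finsetEquivDistinct]
  refine Eq.trans ?_ (tsum_congr hterm).symm
  rw [(finsetEquivDistinct n).tsum_eq
    fun π => (2 : ℂ) ^ π.1.parts.toFinset.card * q ^ n, tsum_fintype, ← Finset.sum_mul]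
  push_cast
  rfl

theorem statement12 :
    (∀ n : ℕ, Fintype.card {o : Overpartition n // missingCount o = 0} =
        Fintype.card {o : Overpartition n // o.partition.parts.Nodup}) ∧
    (∀ q : ℂ, ‖q‖ < 1 →
      ∑' n : ℕ, (Fintype.card {o : Overpartition n // missingCount o = 0} : ℂ) * q ^ n =
        ∏' k : ℕ, (1 + 2 * q ^ (k + 1))) := by
  classical
  have hgap : ∀ n : ℕ, Fintype.card {o : Overpartition n // missingCount o = 0} =
      ∑ π : {π : n.Partition // π.parts.Nodup}, 2 ^ π.1.parts.toFinset.card := by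
    intro n
    rw [card_overpartition (fun o : Overpartition n => missingCount o = 0) GapFree
      fun _ => Iff.rfl, weighted_count_eq n]
  refine ⟨fun n => ?_, fun q hq => ?_⟩
  · rw [hgap n]
    rw [card_overpartition (fun o : Overpartition n => o.partition.parts.Nodup)
      (fun π => π.parts.Nodup) fun _ => Iff.rfl]
  · simp only [hgap]
    exact tsum_distinct q hq
end
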